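/- arXiv:2103.00618 — 2 statements merged into one kernel-verified Lean document; each statement's English description precedes it below -/
import Mathlib

section
/- Let U be a unicyclic graph with cycle C = Cycles(U), and let a, b, c, d be four distinct vertices with ab, cd ∈ E(C) and ac, bd ∉ E(U), so that τ = (a b / c d) is a nontrivial 2-switch on U. Then τ(U) is unicyclic if and only if τ(C) := C − ab − cd + ac + bd restricted to the vertices of C is connected (equivalently, τ is not a breaker over C). -/
/-!
Let `C` be the cycle of `U`, with vertex set `W`, and let `C' = τ(C)`. Degrees are preserved, so
`C'` is 2-regular on `W`, and hence (in a finite graph) none of its edges is a bridge.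

If `τ(U)` has exactly one cycle `K`, every edge of `C'` lies on a cycle of `τ(U)`, that is, on `K`.
A nonempty 2-regular graph inside a cycle is the whole cycle
(`IsCycleSubgraph.eq_of_isCycles_le`), so `C' = K`, which is connected.

Conversely, let `C'` be connected on `W`. Replacing `C` by `C'` does not change which vertices are
joined by paths, because both connect `W` and have no edge leaving `W`. Thus `τ(U)` is connected;
and an edge outside `C'` lying on a cycle of `τ(U)` would be a non-bridge of `τ(U)`, hence of `U`,
so it would lie on `C`, which is impossible. So every cycle of `τ(U)` lies inside `C'` and
therefore equals it.
-/

open SimpleGraph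

variable {V : Type*}

/-- The 2-switch (a b / c d): delete the edges ab, cd and add the edges ac, bd. -/
def twoSwitch (G : SimpleGraph V) (a b c d : V) : SimpleGraph V :=
  (G.deleteEdges {s(a, b), s(c, d)}) ⊔ SimpleGraph.fromEdgeSet {s(a, c), s(b, d)}

/-- τ = (a b / c d) is a nontrivial 2-switch on `G`: the four vertices are distinct,
`ab, cd ∈ E(G)` and `ac, bd ∉ E(G)`. -/
def IsNontrivialSwitch (G : SimpleGraph V) (a b c d : V) : Prop :=
  [a, b, c, d].Nodup ∧ G.Adj a b ∧ G.Adj c d ∧ ¬ G.Adj a c ∧ ¬ G.Adj b d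

/-- A cycle subgraph: a subgraph isomorphic to a cycle graph, i.e. a subgraph that is
connected and 2-regular (every vertex of the subgraph has exactly two neighbours in it). -/
def IsCycleSubgraph (G : SimpleGraph V) (H : G.Subgraph) : Prop :=
  H.coe.Connected ∧ ∀ v ∈ H.verts, (H.neighborSet v).ncard = 2

/-- A graph is unicyclic if it is connected and contains exactly one cycle subgraph. -/
def Unicyclic (G : SimpleGraph V) : Prop :=
  G.Connected ∧ ∃! H : G.Subgraph, IsCycleSubgraph G H

/-- `Cycles(G)`: the subgraph formed by all vertices and edges of `G` lying on some cycle. -/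
def cyclesSub (G : SimpleGraph V) : G.Subgraph :=
  sSup {H | IsCycleSubgraph G H}

/-- `Forest(G) := G − E(Cycles(G))`. -/
def forestPart (G : SimpleGraph V) : SimpleGraph V :=
  G.deleteEdges (cyclesSub G).edgeSet

/-- A pseudoforest: every connected component contains at most one cycle subgraph, i.e. any
two cycle subgraphs lying in the same connected component coincide. -/
def Pseudoforest (G : SimpleGraph V) : Prop :=
  ∀ H₁ H₂ : G.Subgraph, IsCycleSubgraph G H₁ → IsCycleSubgraph G H₂ →
    (∃ u ∈ H₁.verts, ∃ v ∈ H₂.verts, G.Reachable u v) → H₁ = H₂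

/-- `cycles(G)`: the number of cycle subgraphs of `G`. -/
noncomputable def numCycles (G : SimpleGraph V) : ℕ :=
  {H : G.Subgraph | IsCycleSubgraph G H}.ncard

/-- `κ(G)`: the number of connected components of `G`. -/
noncomputable def numComponents (G : SimpleGraph V) : ℕ :=
  Nat.card G.ConnectedComponent

/-- `G'` is obtained from `G` by a nontrivial 2-switch. -/
def SwitchStep (G G' : SimpleGraph V) : Prop :=
  ∃ a b c d : V, IsNontrivialSwitch G a b c d ∧ G' = twoSwitch G a b c d

/-- A cycle graph: a connected 2-regular graph. -/
def IsCycleGraph (G : SimpleGraph V) : Prop :=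
  G.Connected ∧ ∀ v : V, (G.neighborSet v).ncard = 2

/-- `ℓ` is a leaf shared by `G` and `H`: it has degree one in both and its unique incident
edge is common to both graphs. -/
def SharedLeaf (G H : SimpleGraph V) : Prop :=
  ∃ ℓ v : V, (G.neighborSet ℓ).ncard = 1 ∧ (H.neighborSet ℓ).ncard = 1 ∧
    G.Adj ℓ v ∧ H.Adj ℓ v

theorem twoSwitch_adj {G : SimpleGraph V} {a b c d x y : V} :
    (twoSwitch G a b c d).Adj x y ↔
      (G.Adj x y ∧ s(x, y) ≠ s(a, b) ∧ s(x, y) ≠ s(c, d)) ∨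
        ((s(x, y) = s(a, c) ∨ s(x, y) = s(b, d)) ∧ x ≠ y) := by
  simp only [twoSwitch, SimpleGraph.sup_adj, SimpleGraph.deleteEdges_adj,
    SimpleGraph.fromEdgeSet_adj, Set.mem_insert_iff, Set.mem_singleton_iff, not_or]

theorem twoSwitch_symm₁ (G : SimpleGraph V) (a b c d : V) :
    twoSwitch G a b c d = twoSwitch G c d a b := by
  simp only [twoSwitch, Set.pair_comm s(a, b), Sym2.eq_swap (a := a) (b := c),
    Sym2.eq_swap (a := b) (b := d)]

theorem twoSwitch_symm₂ (G : SimpleGraph V) (a b c d : V) :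
    twoSwitch G a b c d = twoSwitch G b a d c := by
  simp only [twoSwitch, Sym2.eq_swap (a := a) (b := b), Sym2.eq_swap (a := c) (b := d),
    Set.pair_comm s(a, c)]

theorem ncard_neighborSet_twoSwitch_left [Finite V] {G : SimpleGraph V} {a b c d : V}
    (hdist : [a, b, c, d].Nodup) (hab : G.Adj a b) (hac : ¬ G.Adj a c) :
    ((twoSwitch G a b c d).neighborSet a).ncard = (G.neighborSet a).ncard := by
  have h : (twoSwitch G a b c d).neighborSet a = insert c (G.neighborSet a \ {b}) := by
    ext y
    simp only [SimpleGraph.mem_neighborSet, twoSwitch_adj, Set.mem_insert_iff, Set.mem_sdiff,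
      Set.mem_singleton_iff, Sym2.eq_iff]
    simp only [List.nodup_cons, List.mem_cons, not_or] at hdist
    grind
  rw [h, Set.ncard_insert_of_notMem (fun hc => hac hc.1),
    Set.ncard_sdiff_singleton_add_one (show b ∈ G.neighborSet a from hab)]

/-- A 2-switch preserves degrees. -/
theorem ncard_neighborSet_twoSwitch [Finite V] {G : SimpleGraph V} {a b c d : V}
    (hdist : [a, b, c, d].Nodup) (hab : G.Adj a b) (hcd : G.Adj c d)
    (hac : ¬ G.Adj a c) (hbd : ¬ G.Adj b d) (v : V) :
    ((twoSwitch G a b c d).neighborSet v).ncard = (G.neighborSet v).ncard := by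
  by_cases hva : v = a
  · subst hva
    exact ncard_neighborSet_twoSwitch_left hdist hab hac
  by_cases hvb : v = b
  · subst hvb
    rw [twoSwitch_symm₂]
    exact ncard_neighborSet_twoSwitch_left (by simp at hdist ⊢; grind) hab.symm hbd
  by_cases hvc : v = c
  · subst hvc
    rw [twoSwitch_symm₁]
    exact ncard_neighborSet_twoSwitch_left (by simp at hdist ⊢; grind) hcd (mt .symm hac)
  by_cases hvd : v = d
  · subst hvd
    rw [twoSwitch_symm₁, twoSwitch_symm₂]
    exact ncard_neighborSet_twoSwitch_left (by simp at hdist ⊢; grind) hcd.symm (mt .symm hbd)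
  congr 1
  ext y
  simp only [SimpleGraph.mem_neighborSet, twoSwitch_adj, Sym2.eq_iff]
  grind

theorem IsCycleSubgraph.isCycles {G : SimpleGraph V} {H : G.Subgraph} (hH : IsCycleSubgraph G H) :
    H.spanningCoe.IsCycles := by
  rintro v ⟨w, hw⟩
  exact hH.2 v (H.edge_vert hw)

theorem IsCycleSubgraph.exists_adj {G : SimpleGraph V} {H : G.Subgraph}
    (hH : IsCycleSubgraph G H) {v : V} (hv : v ∈ H.verts) : ∃ w, H.Adj v w := by
  have : (H.neighborSet v).Nonempty := by
    apply Set.nonempty_of_ncard_ne_zero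
    rw [hH.2 v hv]
    decide
  exact this

/-- An edge that is not a bridge lies on a cycle subgraph. -/
theorem exists_isCycleSubgraph_of_reachable [Finite V] {G : SimpleGraph V} {x y : V}
    (hxy : G.Adj x y) (h : (G.deleteEdges {s(x, y)}).Reachable x y) :
    ∃ H : G.Subgraph, IsCycleSubgraph G H ∧ H.Adj x y := by
  obtain ⟨u, p, hp, he⟩ := adj_and_reachable_delete_edges_iff_exists_cycle.1 ⟨hxy, h⟩
  refine ⟨p.toSubgraph, ⟨p.toSubgraph_connected.coe, fun v hv => ?_⟩, ?_⟩
  · exact hp.ncard_neighborSet_toSubgraph_eq_two (p.mem_verts_toSubgraph.1 hv)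
  · rw [← SimpleGraph.Subgraph.mem_edgeSet, Walk.mem_edges_toSubgraph]
    exact he

theorem exists_isCycleSubgraph_of_isCycles_le [Finite V] {G S : SimpleGraph V} (hS : S.IsCycles)
    (hle : S ≤ G) {x y : V} (hxy : S.Adj x y) :
    ∃ H : G.Subgraph, IsCycleSubgraph G H ∧ H.Adj x y :=
  exists_isCycleSubgraph_of_reachable (hle hxy)
    ((hS.reachable_deleteEdges hxy).mono (SimpleGraph.deleteEdges_mono hle))

/-- A nonempty graph with all degrees `0` or `2` inside a cycle is the whole cycle: the set of
vertices where the two graphs have the same neighbours is nonempty and closed under adjacency in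
the cycle. -/
theorem IsCycleSubgraph.eq_of_isCycles_le [Finite V] {G S : SimpleGraph V} {K : G.Subgraph}
    (hK : IsCycleSubgraph G K) (hS : S.IsCycles) (hle : S ≤ K.spanningCoe) {x₀ y₀ : V}
    (h₀ : S.Adj x₀ y₀) : S = K.spanningCoe := by
  have key : ∀ v w, S.Adj v w → S.neighborSet v = K.neighborSet v := fun v w h =>
    Set.eq_of_subset_of_ncard_le (fun u hu => hle hu)
      (by rw [hS ⟨w, h⟩, hK.2 v (K.edge_vert (hle h))]) (Set.toFinite _)
  have hx₀ : x₀ ∈ K.verts := K.edge_vert (hle h₀)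
  have hall : ∀ v : K.verts, S.neighborSet v = K.neighborSet v := by
    intro v
    obtain ⟨p⟩ := hK.1.preconnected v ⟨x₀, hx₀⟩
    generalize hz : (⟨x₀, hx₀⟩ : K.verts) = z at p
    induction p with
    | nil => subst hz; exact key _ _ h₀
    | @cons u v w h p ih =>
      have h1 : (u : V) ∈ K.neighborSet v := SimpleGraph.Subgraph.Adj.symm h
      rw [← ih hz] at h1
      exact key _ _ (SimpleGraph.Adj.symm h1)
  refine le_antisymm hle fun x y hxy => ?_
  have : y ∈ S.neighborSet x := by
    rw [hall ⟨x, K.edge_vert hxy⟩]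
    exact hxy
  exact this

theorem reachable_of_adj_imp {G G' : SimpleGraph V} (h : ∀ x y, G.Adj x y → G'.Reachable x y)
    {x y : V} (hxy : G.Reachable x y) : G'.Reachable x y := by
  obtain ⟨p⟩ := hxy
  induction p with
  | nil => exact .refl _
  | cons e p ih => exact (h _ _ e).trans ih

/-- The equivalence with the unique cycle `C` of `U` made explicit. -/
theorem unicyclic_twoSwitch_iff [Finite V] {U : SimpleGraph V} (hconn : U.Connected)
    {C : U.Subgraph} (hC : IsCycleSubgraph U C) (huniq : ∀ H, IsCycleSubgraph U H → H = C)
    {a b c d : V} (hdist : [a, b, c, d].Nodup) (hab : C.Adj a b) (hcd : C.Adj c d)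
    (hac : ¬ U.Adj a c) (hbd : ¬ U.Adj b d) :
    Unicyclic (twoSwitch U a b c d) ↔
      ((twoSwitch C.spanningCoe a b c d).induce C.verts).Connected := by
  have hdeg := ncard_neighborSet_twoSwitch (G := C.spanningCoe) hdist hab hcd
    (fun h => hac h.adj_sub) (fun h => hbd h.adj_sub)
  have hle : twoSwitch C.spanningCoe a b c d ≤ twoSwitch U a b c d := by
    intro x y h
    rw [twoSwitch_adj] at h ⊢
    exact h.imp_left fun h => ⟨h.1.adj_sub, h.2⟩
  -- An edge of `τ(U)` outside `τ(C)` is an edge of `U` outside `C`; edges of `U` outside `C` survive.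
  have hsplit' : ∀ x y, (twoSwitch U a b c d).Adj x y →
      (twoSwitch C.spanningCoe a b c d).Adj x y ∨ (U.Adj x y ∧ ¬ C.Adj x y) := by
    intro x y h
    rw [twoSwitch_adj] at h ⊢
    by_cases hxy : C.Adj x y
    · exact .inl (h.imp_left fun h => ⟨hxy, h.2⟩)
    · rcases h with h | h
      · exact .inr ⟨h.1, hxy⟩
      · exact .inl (.inr h)
  have hsplit : ∀ x y, U.Adj x y → ¬ C.Adj x y → (twoSwitch U a b c d).Adj x y := by
    intro x y h hxy
    refine twoSwitch_adj.2 (.inl ⟨h, fun he => hxy ?_, fun he => hxy ?_⟩)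
    · rwa [← C.mem_edgeSet, he]
    · rwa [← C.mem_edgeSet, he]
  have hvert : ∀ x y, (twoSwitch C.spanningCoe a b c d).Adj x y → x ∈ C.verts := by
    intro x y h
    have ha := C.edge_vert hab
    have hb := C.edge_vert hab.symm
    have hc := C.edge_vert hcd
    have hd := C.edge_vert hcd.symm
    rw [twoSwitch_adj] at h
    simp only [Sym2.eq_iff] at h
    rcases h with h | ⟨h, -⟩
    · exact C.edge_vert h.1
    · grind
  have hdeg2 : ∀ v ∈ C.verts, ((twoSwitch C.spanningCoe a b c d).neighborSet v).ncard = 2 :=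
    fun v hv => (hdeg v).trans (hC.2 v hv)
  have hac' : (twoSwitch C.spanningCoe a b c d).Adj a c := by
    refine twoSwitch_adj.2 (.inr ⟨.inl rfl, ?_⟩)
    simp at hdist
    grind
  generalize twoSwitch C.spanningCoe a b c d = C' at *
  generalize twoSwitch U a b c d = U' at *
  have hcyc : C'.IsCycles := fun v ⟨w, hw⟩ => hdeg2 v (hvert v w hw)
  constructor
  · rintro ⟨-, K, hK, hKu⟩
    have hCK : C' = K.spanningCoe := by
      refine hK.eq_of_isCycles_le hcyc (fun x y hxy => ?_) hac'
      obtain ⟨H, hH, hHxy⟩ := exists_isCycleSubgraph_of_isCycles_le hcyc hle hxy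
      rw [← hKu H hH]
      exact hHxy
    have hW : C.verts = K.verts := by
      ext v
      constructor
      · intro hv
        obtain ⟨w, hw⟩ : (C'.neighborSet v).Nonempty :=
          Set.nonempty_of_ncard_ne_zero (by rw [hdeg2 v hv]; decide)
        rw [hCK] at hw
        exact K.edge_vert hw
      · intro hv
        obtain ⟨w, hw⟩ := hK.exists_adj hv
        exact hvert v w (by rw [hCK]; exact hw)
    rw [hW, hCK]
    exact hK.1
  · intro hcon
    let K : U'.Subgraph :=
      { verts := C.verts
        Adj := C'.Adj
        adj_sub := fun h => hle h
        edge_vert := fun h => hvert _ _ h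
        symm := C'.symm }
    have hK : IsCycleSubgraph U' K := ⟨hcon, hdeg2⟩
    have hreach' : ∀ x ∈ C.verts, ∀ y ∈ C.verts, C'.Reachable x y := fun x hx y hy =>
      (hcon.preconnected ⟨x, hx⟩ ⟨y, hy⟩).map (SimpleGraph.Embedding.induce _).toHom
    have hreach : ∀ x ∈ C.verts, ∀ y ∈ C.verts, C.spanningCoe.Reachable x y := fun x hx y hy =>
      (hC.1.preconnected ⟨x, hx⟩ ⟨y, hy⟩).map
        (⟨Subtype.val, fun h => h⟩ : C.coe →g C.spanningCoe)
    refine ⟨?_, K, hK, ?_⟩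
    · have := hconn.nonempty
      refine ⟨fun x y => reachable_of_adj_imp (G := U) (fun x y h => ?_)
        (hconn.preconnected x y)⟩
      by_cases hxy : C.Adj x y
      · exact (hreach' x (C.edge_vert hxy) y (C.edge_vert hxy.symm)).mono hle
      · exact (hsplit x y h hxy).reachable
    · intro L hL
      have hLK : L.spanningCoe ≤ K.spanningCoe := by
        intro x y hxy
        by_contra hn
        have hn : ¬ C'.Adj x y := hn
        obtain ⟨hUxy, hCxy⟩ := (hsplit' x y (L.adj_sub hxy)).resolve_left hn
        -- `xy` is not a bridge of `U'`; detours through `C'` can be replaced by ones through `C`.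
        have h1 : (U'.deleteEdges {s(x, y)}).Reachable x y :=
          (hL.isCycles.reachable_deleteEdges hxy).mono
            (SimpleGraph.deleteEdges_mono L.spanningCoe_le)
        have h2 : (U.deleteEdges {s(x, y)}).Reachable x y := by
          refine reachable_of_adj_imp (fun u v huv => ?_) h1
          rw [SimpleGraph.deleteEdges_adj] at huv
          rcases hsplit' u v huv.1 with h | h
          · refine (hreach u (hvert _ _ h) v (hvert _ _ h.symm)).mono fun p q hpq => ?_
            refine SimpleGraph.deleteEdges_adj.2 ⟨hpq.adj_sub, fun he => hCxy ?_⟩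
            rw [Set.mem_singleton_iff] at he
            rw [← C.mem_edgeSet, ← he]
            exact hpq
          · exact (SimpleGraph.deleteEdges_adj.2 ⟨h.1, huv.2⟩ :
              (U.deleteEdges {s(x, y)}).Adj u v).reachable
        obtain ⟨H, hH, hHxy⟩ := exists_isCycleSubgraph_of_reachable hUxy h2
        rw [huniq H hH] at hHxy
        exact hCxy hHxy
      obtain ⟨⟨x, hx⟩⟩ := hL.1.nonempty
      obtain ⟨y, hxy⟩ := hL.exists_adj hx
      have heq := hK.eq_of_isCycles_le hL.isCycles hLK hxy
      have hadj : ∀ u v, L.Adj u v ↔ K.Adj u v := fun u v => by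
        rw [← SimpleGraph.Subgraph.spanningCoe_adj, heq, SimpleGraph.Subgraph.spanningCoe_adj]
      refine SimpleGraph.Subgraph.ext (Set.ext fun v => ⟨fun hv => ?_, fun hv => ?_⟩)
        (funext fun u => funext fun v => propext (hadj u v))
      · obtain ⟨w, hw⟩ := hL.exists_adj hv
        exact K.edge_vert ((hadj v w).1 hw)
      · obtain ⟨w, hw⟩ := hK.exists_adj hv
        exact L.edge_vert ((hadj v w).2 hw)

/-- for a nontrivial 2-switch τ on a unicyclic graph U between two edges of its
cycle C = Cycles(U): τ(U) is unicyclic iff τ(C) restricted to the vertices of C is connected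
(τ is not a breaker over C). -/
theorem stmt4 {V : Type*} [Fintype V] (U : SimpleGraph V) (hU : Unicyclic U)
    (a b c d : V) (hdist : [a, b, c, d].Nodup)
    (hab : (cyclesSub U).Adj a b) (hcd : (cyclesSub U).Adj c d)
    (hac : ¬ U.Adj a c) (hbd : ¬ U.Adj b d) :
    Unicyclic (twoSwitch U a b c d) ↔
      ((twoSwitch (cyclesSub U).spanningCoe a b c d).induce (cyclesSub U).verts).Connected := by
  obtain ⟨hconn, C, hC, huniq⟩ := hU
  have hcyc : cyclesSub U = C := by
    have : {H : U.Subgraph | IsCycleSubgraph U H} = {C} :=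
      Set.eq_singleton_iff_unique_mem.2 ⟨hC, huniq⟩
    rw [cyclesSub, this, sSup_singleton]
  rw [hcyc] at hab hcd ⊢
  exact unicyclic_twoSwitch_iff hconn hC huniq hdist hab hcd hac hbd
end

section
/- Let U and U' be unicyclic graphs on the same vertex set with deg_U(x) = deg_{U'}(x) for every vertex x, such that neither U nor U' is a cycle graph, and such that U and U' do not share a leaf. Then there exists a nontrivial 2-switch τ on U with τ(U) unicyclic such that τ(U) and U' share a leaf, or there exists a nontrivial 2-switch τ' on U' with τ'(U') unicyclic such that U and τ'(U') share a leaf. -/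
/-!
A graph is unicyclic iff it is connected and has as many edges as vertices (`unicyclic_iff`). A
2-switch preserves the number of edges, so only connectedness has to be controlled.

A unicyclic graph has average degree two; as `U` is not a cycle graph, it has a leaf `l`
(`Unicyclic.exists_leaf`), which is a leaf of `U'` too. Let `v`, `v'` be its neighbours in `U`
and `U'`; they differ because no leaf is shared. By symmetry let `deg v ≤ deg v'`, and work in `U`.
For a neighbour `w` of `v'`, the switch `(l v / v' w)` attaches `l` to `v'` and replaces
`v'w` by `vw`. It is nontrivial when `w ≠ v` and `vw` is not an edge, and keeps the graph
connected when `v` and `v'` are still joined after deleting `v'w` (`connected_twoSwitch_leaf`).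

Such a `w` exists (`exists_edge_to_switch`). The vertex `v` has a neighbour besides `l`, hence
`deg v' ≥ deg v ≥ 2`. If `v` and `v'` are at distance at least three, any neighbour of `v'` off a
path to `v` works. If they are adjacent, or have a common neighbour `u`, a neighbour `w` of `v'`
off the edge `v'v`, respectively the path `v'uv`, can fail only by being adjacent to `v`; then
`deg v ≥ 3`, so `v'` has a further such neighbour. If that one failed as well, two triangles on a
common edge, respectively a `K_{2,3}`, would arise, contradicting the uniqueness of the cycle.
-/

open SimpleGraph

variable {V : Type*}

/-! ### Unicyclic graphs as connected graphs with as many edges as vertices -/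

theorem ncard_neighborSet_eq_degree [Fintype V] (G : SimpleGraph V) (v : V)
    [Fintype (G.neighborSet v)] : (G.neighborSet v).ncard = G.degree v := by
  rw [← card_neighborSet_eq_degree, Set.ncard_eq_toFinset_card', Set.toFinset_card]

theorem not_isAcyclic_of_two_regular {W : Type*} [Finite W] {H : SimpleGraph W}
    (hc : H.Connected) (h2 : ∀ w, (H.neighborSet w).ncard = 2) : ¬ H.IsAcyclic := by
  classical
  intro hac
  have := Fintype.ofFinite W
  have hnt : Nontrivial W := by
    obtain ⟨w⟩ := hc.nonempty
    obtain ⟨x, hx⟩ : (H.neighborSet w).Nonempty := by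
      rw [← Set.ncard_pos (Set.toFinite _), h2]; norm_num
    exact ⟨w, x, hx.ne⟩
  obtain ⟨v, hv⟩ := (IsTree.mk hc hac).exists_vert_degree_one_of_nontrivial
  have := h2 v
  rw [ncard_neighborSet_eq_degree] at this
  omega

/-- A graph containing all edges of a cycle subgraph `H` of some graph `G` is not acyclic. -/
theorem IsCycleSubgraph.not_isAcyclic [Finite V] {G F : SimpleGraph V} {H : G.Subgraph}
    (hH : IsCycleSubgraph G H) (hF : ∀ x y, H.Adj x y → F.Adj x y) : ¬ F.IsAcyclic := by
  intro hac
  refine not_isAcyclic_of_two_regular hH.1 (fun w => ?_)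
    (hac.comap (⟨Subtype.val, fun {a b} h => hF _ _ h⟩ : H.coe →g F) Subtype.val_injective)
  rw [← hH.2 w w.2, ← Set.ncard_image_of_injective _ Subtype.val_injective]
  congr 1
  ext x
  simp only [Set.mem_image, mem_neighborSet, Subgraph.coe_adj, Subgraph.mem_neighborSet]
  constructor
  · rintro ⟨y, hy, rfl⟩; exact hy
  · intro hx; exact ⟨⟨x, hx.snd_mem⟩, hx, rfl⟩

theorem isCycleSubgraph_toSubgraph {G : SimpleGraph V} {u : V} {p : G.Walk u u}
    (hp : p.IsCycle) : IsCycleSubgraph G p.toSubgraph :=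
  ⟨p.toSubgraph_connected.coe, fun _ hv =>
    hp.ncard_neighborSet_toSubgraph_eq_two (p.mem_verts_toSubgraph.mp hv)⟩

/-- A cycle subgraph is not properly contained in another one: connectedness of the larger one
propagates the equality of the neighbourhoods. -/
theorem IsCycleSubgraph.eq_of_le [Finite V] {G : SimpleGraph V} {H K : G.Subgraph}
    (hH : IsCycleSubgraph G H) (hK : IsCycleSubgraph G K) (hle : H ≤ K) : H = K := by
  have hnb : ∀ x ∈ H.verts, H.neighborSet x = K.neighborSet x := fun x hx =>
    Set.eq_of_subset_of_ncard_le (fun y hy => hle.2 hy)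
      (by rw [hH.2 x hx, hK.2 x (hle.1 hx)]) (Set.toFinite _)
  have hreach : ∀ x y : K.verts, K.coe.Reachable x y → (x : V) ∈ H.verts → (y : V) ∈ H.verts := by
    rintro x y ⟨p⟩
    induction p with
    | nil => exact id
    | @cons a b c h q ih =>
      intro ha
      apply ih
      have : (b : V) ∈ K.neighborSet a := h
      rw [← hnb _ ha] at this
      exact H.edge_vert (Subgraph.Adj.symm this)
  obtain ⟨⟨x, hx⟩⟩ := hH.1.nonempty
  have hv : H.verts = K.verts := Set.Subset.antisymm hle.1 fun y hy =>
    hreach ⟨x, hle.1 hx⟩ ⟨y, hy⟩ (hK.1 _ _) hx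
  refine Subgraph.ext hv ?_
  ext x y
  refine ⟨fun h => hle.2 h, fun h => ?_⟩
  have hx : x ∈ H.verts := hv ▸ K.edge_vert h
  have : y ∈ K.neighborSet x := h
  rwa [← hnb x hx] at this

theorem ncard_edgeSet_deleteEdges [Finite V] {G : SimpleGraph V} {x y : V} (h : G.Adj x y) :
    (G.deleteEdges {s(x, y)}).edgeSet.ncard + 1 = G.edgeSet.ncard := by
  rw [edgeSet_deleteEdges]
  exact Set.ncard_sdiff_singleton_add_one (by simpa using h) (Set.toFinite _)

/-- Unicyclic graphs are the connected graphs with as many edges as vertices. -/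
theorem unicyclic_iff [Finite V] {G : SimpleGraph V} :
    Unicyclic G ↔ G.Connected ∧ G.edgeSet.ncard = Nat.card V := by
  have key : ∀ {u : V} (p : G.Walk u u), p.IsCycle → ∀ x y, s(x, y) ∈ p.edges → G.Connected →
      (G.deleteEdges {s(x, y)}).Connected := fun p hp x y hxy hc =>
    hc.connected_delete_edge_of_not_isBridge fun hb => hb.notMem_edges_of_isCycle hp hxy
  constructor
  · rintro ⟨hc, H, hH, huniq⟩
    refine ⟨hc, ?_⟩
    have hna := hH.not_isAcyclic (F := G) fun x y h => h.adj_sub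
    simp only [IsAcyclic, not_forall, not_not] at hna
    obtain ⟨u, p, hp⟩ := hna
    obtain ⟨y, hy⟩ : ∃ y, s(u, y) ∈ p.edges := by
      cases p with
      | nil => simp at hp
      | @cons _ y _ h q => exact ⟨y, by simp⟩
    have hadj : G.Adj u y := p.edges_subset_edgeSet hy
    have hT : (G.deleteEdges {s(u, y)}).IsTree := by
      refine ⟨key p hp _ _ hy hc, fun w q hq => ?_⟩
      have hle := G.deleteEdges_le {s(u, y)}
      have e1 := huniq _ (isCycleSubgraph_toSubgraph hp)
      have e2 := huniq _ (isCycleSubgraph_toSubgraph (hq.mapLe hle))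
      have : s(u, y) ∈ (q.mapLe hle).edges := by
        rw [← Walk.mem_edges_toSubgraph, e2, ← e1, Walk.mem_edges_toSubgraph]
        exact hy
      rw [Walk.edges_mapLe_eq_edges] at this
      have := q.edges_subset_edgeSet this
      simp at this
    have := (isTree_iff_connected_and_card.mp hT).2
    rw [Nat.card_coe_set_eq, ncard_edgeSet_deleteEdges hadj] at this
    exact this
  · rintro ⟨hc, hcard⟩
    refine ⟨hc, ?_⟩
    have hna : ¬ G.IsAcyclic := fun hac => by
      have := (isTree_iff_connected_and_card.mp ⟨hc, hac⟩).2
      rw [Nat.card_coe_set_eq] at this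
      omega
    simp only [IsAcyclic, not_forall, not_not] at hna
    obtain ⟨u, p, hp⟩ := hna
    refine ⟨p.toSubgraph, isCycleSubgraph_toSubgraph hp, fun H hH => ?_⟩
    refine (IsCycleSubgraph.eq_of_le (isCycleSubgraph_toSubgraph hp) hH ?_).symm
    -- Deleting an edge of `p` leaves a tree, so every cycle subgraph uses all edges of `p`.
    have hedge : ∀ x y, p.toSubgraph.Adj x y → H.Adj x y := by
      intro x y hxy
      by_contra hn
      have hxy' : s(x, y) ∈ p.edges := by
        rw [← Walk.mem_edges_toSubgraph]; exact hxy
      have hT : (G.deleteEdges {s(x, y)}).IsTree := by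
        rw [isTree_iff_connected_and_card, Nat.card_coe_set_eq,
          ncard_edgeSet_deleteEdges hxy.adj_sub]
        exact ⟨key p hp _ _ hxy' hc, hcard⟩
      refine hH.not_isAcyclic (F := G.deleteEdges {s(x, y)}) ?_ hT.isAcyclic
      intro a b hab
      rw [deleteEdges_adj]
      refine ⟨hab.adj_sub, ?_⟩
      simp only [Set.mem_singleton_iff, Sym2.eq_iff]
      rintro (⟨rfl, rfl⟩ | ⟨rfl, rfl⟩)
      exacts [hn hab, hn hab.symm]
    refine ⟨fun x hx => ?_, hedge⟩
    obtain ⟨y, hy⟩ : (p.toSubgraph.neighborSet x).Nonempty := by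
      rw [← Set.ncard_pos (Set.toFinite _), (isCycleSubgraph_toSubgraph hp).2 x hx]; norm_num
    exact H.edge_vert (hedge _ _ hy)

/-! ### Forbidden configurations in unicyclic graphs -/

theorem Unicyclic.mem_edges [Finite V] {G : SimpleGraph V} (hG : Unicyclic G) {u w : V}
    {p : G.Walk u u} {q : G.Walk w w} (hp : p.IsCycle) (hq : q.IsCycle) {e : Sym2 V}
    (he : e ∈ p.edges) : e ∈ q.edges := by
  rw [← Walk.mem_edges_toSubgraph] at he ⊢
  rwa [hG.2.unique (isCycleSubgraph_toSubgraph hq) (isCycleSubgraph_toSubgraph hp)]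

/-- Two triangles on a common edge do not fit into a unicyclic graph. -/
theorem Unicyclic.false_of_two_triangles [Finite V] {G : SimpleGraph V} (hG : Unicyclic G)
    {x y a b : V} (hxy : G.Adj x y) (hxa : G.Adj x a) (hxb : G.Adj x b) (hya : G.Adj y a)
    (hyb : G.Adj y b) (hab : a ≠ b) : False := by
  have hp : (Walk.cons hxy (.cons hya (.cons hxa.symm .nil))).IsCycle := by
    simp [Walk.cons_isCycle_iff, hxy.ne, hxy.ne', hxa.ne, hxa.ne', hya.ne]
  have hq : (Walk.cons hxy (.cons hyb (.cons hxb.symm .nil))).IsCycle := by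
    simp [Walk.cons_isCycle_iff, hxy.ne, hxy.ne', hxb.ne, hxb.ne', hyb.ne]
  have := hG.mem_edges hp hq (e := s(a, x)) (by simp)
  simp [hab, hxy.ne, hxb.ne, hxa.ne', hya.ne'] at this

/-- `K_{2,3}` does not fit into a unicyclic graph. -/
theorem Unicyclic.false_of_three_common [Finite V] {G : SimpleGraph V} (hG : Unicyclic G)
    {x y a b c : V} (hxy : x ≠ y) (hxa : G.Adj x a) (hxb : G.Adj x b) (hxc : G.Adj x c)
    (hya : G.Adj y a) (hyb : G.Adj y b) (hyc : G.Adj y c)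
    (hab : a ≠ b) (hac : a ≠ c) (hbc : b ≠ c) : False := by
  have hp : (Walk.cons hxa (.cons hya.symm (.cons hyb (.cons hxb.symm .nil)))).IsCycle := by
    simp [Walk.cons_isCycle_iff, hxy, hxy.symm, hxa.ne, hxa.ne', hya.ne', hxb.ne, hxb.ne',
      hyb.ne, hab]
  have hq : (Walk.cons hxa (.cons hya.symm (.cons hyc (.cons hxc.symm .nil)))).IsCycle := by
    simp [Walk.cons_isCycle_iff, hxy, hxy.symm, hxa.ne, hxa.ne', hya.ne', hxc.ne, hxc.ne',
      hyc.ne, hac]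
  have := hG.mem_edges hp hq (e := s(b, x)) (by simp)
  simp [hab.symm, hbc, hxy, hxb.ne', hxa.ne, hyb.ne', hxc.ne] at this

theorem IsNontrivialSwitch.ncard_edgeSet [Finite V] {G : SimpleGraph V} {a b c d : V}
    (h : IsNontrivialSwitch G a b c d) :
    (twoSwitch G a b c d).edgeSet.ncard = G.edgeSet.ncard := by
  obtain ⟨hnd, hab, hcd, hac, hbd⟩ := h
  simp only [List.nodup_cons, List.mem_cons, List.not_mem_nil, or_false, not_or,
    List.nodup_nil, not_false_eq_true, and_true] at hnd
  obtain ⟨⟨nab, nac, nad⟩, ⟨nbc, nbd⟩, ncd⟩ := hnd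
  have hE : (twoSwitch G a b c d).edgeSet =
      (G.edgeSet \ {s(a, b), s(c, d)}) ∪ {s(a, c), s(b, d)} := by
    ext e
    induction e with
    | h x y =>
      simp only [mem_edgeSet, twoSwitch_adj, Set.mem_union, Set.mem_sdiff, Set.mem_insert_iff,
        Set.mem_singleton_iff, not_or, ne_eq]
      refine or_congr_right ⟨fun h => h.1, fun h => ⟨h, ?_⟩⟩
      rintro rfl
      simp only [Sym2.eq_iff] at h
      grind
  have n1 : s(a, b) ≠ s(c, d) := by simp only [ne_eq, Sym2.eq_iff]; grind
  have n2 : s(a, c) ≠ s(b, d) := by simp only [ne_eq, Sym2.eq_iff]; grind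
  have hsub : ({s(a, b), s(c, d)} : Set (Sym2 V)) ⊆ G.edgeSet := by
    rintro e (rfl | rfl)
    exacts [hab, hcd]
  have hdisj : Disjoint (G.edgeSet \ {s(a, b), s(c, d)}) {s(a, c), s(b, d)} := by
    rw [Set.disjoint_right]
    rintro e (rfl | rfl) he
    exacts [hac he.1, hbd he.1]
  have h1 := Set.ncard_sdiff_add_ncard_of_subset hsub (Set.toFinite _)
  rw [Set.ncard_pair n1] at h1
  rw [hE, Set.ncard_union_eq hdisj (Set.toFinite _) (Set.toFinite _), Set.ncard_pair n2, h1]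

theorem reachable_of_adj_imp_s9 {W : Type*} {G : SimpleGraph V} {H : SimpleGraph W} (f : V → W)
    (hf : ∀ x y, G.Adj x y → H.Reachable (f x) (f y)) {x y : V} (h : G.Reachable x y) :
    H.Reachable (f x) (f y) := by
  obtain ⟨p⟩ := h
  induction p with
  | nil => rfl
  | cons h _ ih => exact (hf _ _ h).trans ih

/-- Moving the leaf `ℓ` from `v` to `v'` at the cost of replacing the edge `v'w` by `vw` keeps the
graph connected as soon as `v` and `v'` stay connected without the edge `v'w`. -/
theorem connected_twoSwitch_leaf {G : SimpleGraph V} (hG : G.Connected) {l v v' w : V}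
    (hs : IsNontrivialSwitch G l v v' w) (hl : ∀ x, G.Adj l x → x = v)
    (hr : (G.deleteEdges {s(v', w)}).Reachable v' v) : (twoSwitch G l v v' w).Connected := by
  classical
  obtain ⟨hnd, hlv, hvw', -, -⟩ := hs
  simp only [List.nodup_cons, List.mem_cons, List.not_mem_nil, or_false, not_or,
    List.nodup_nil, not_false_eq_true, and_true] at hnd
  obtain ⟨⟨nlv, nlv', nlw⟩, ⟨nvv', nvw⟩, nvw'⟩ := hnd
  set T := twoSwitch G l v v' w with hT
  have tlv : T.Adj l v' := twoSwitch_adj.mpr (Or.inr ⟨Or.inl rfl, nlv'⟩)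
  have tvw : T.Adj v w := twoSwitch_adj.mpr (Or.inr ⟨Or.inr rfl, nvw⟩)
  -- Contract the edge `lv` of `G` to `v`; walks avoiding `v'w` then survive in `T`.
  let f : V → V := fun x => if x = l then v else x
  have fl : f l = v := by simp [f]
  have fne : ∀ x, x ≠ l → f x = x := fun x hx => by simp [f, hx]
  have h1 : ∀ x y, (G.deleteEdges {s(v', w)}).Adj x y → T.Reachable (f x) (f y) := by
    intro x y hxy
    rw [deleteEdges_adj, Set.mem_singleton_iff] at hxy
    obtain ⟨hxy, hn⟩ := hxy
    by_cases hx : x = l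
    · subst hx
      rw [hl _ hxy, fl, fne _ (Ne.symm nlv)]
    by_cases hy : y = l
    · subst hy
      rw [hl _ hxy.symm, fl, fne _ (Ne.symm nlv)]
    rw [fne _ hx, fne _ hy]
    refine (twoSwitch_adj.mpr (Or.inl ⟨hxy, ?_, hn⟩)).reachable
    simp only [ne_eq, Sym2.eq_iff]
    grind
  have h2 : T.Reachable v' w := by
    have := reachable_of_adj_imp_s9 f h1 hr
    rw [fne _ (Ne.symm nlv'), fne _ (Ne.symm nlv)] at this
    exact this.trans tvw.reachable
  have h3 : ∀ x y, G.Adj x y → T.Reachable (f x) (f y) := by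
    intro x y hxy
    by_cases he : s(x, y) = s(v', w)
    · rw [Sym2.eq_iff] at he
      obtain ⟨rfl, rfl⟩ | ⟨rfl, rfl⟩ := he
      · rwa [fne _ (Ne.symm nlv'), fne _ (Ne.symm nlw)]
      · rw [fne _ (Ne.symm nlv'), fne _ (Ne.symm nlw)]
        exact h2.symm
    · exact h1 x y (by rw [deleteEdges_adj]; exact ⟨hxy, he⟩)
  refine (connected_iff_exists_forall_reachable _).2 ⟨v', fun x => ?_⟩
  by_cases hx : x = l
  · subst hx; exact tlv.symm.reachable
  · have := reachable_of_adj_imp_s9 f h3 (hG.preconnected v' x)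
    rwa [fne _ (Ne.symm nlv'), fne _ hx] at this

/-! ### Choosing the switch -/

/-- The choice of the edge `v'w` to be switched with the leaf edge `lv`. If the edge `vv'` or a path
`v'uv` of length two is present, the degree hypothesis and the uniqueness of the cycle provide a
neighbour `w` of `v'` that is not adjacent to `v`; otherwise any neighbour of `v'` off a
path from `v'` to `v` will do. -/
theorem exists_edge_to_switch [Finite V] {G : SimpleGraph V} (hG : Unicyclic G) {l v v' : V}
    (hl : ∀ x, G.Adj l x → x = v) (hlv : G.Adj l v) (hne : v ≠ v') (hlv' : l ≠ v')
    (hd : (G.neighborSet v).ncard ≤ (G.neighborSet v').ncard) :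
    ∃ w, G.Adj v' w ∧ w ≠ v ∧ ¬ G.Adj v w ∧ (G.deleteEdges {s(v', w)}).Reachable v' v := by
  have hlN : ¬ G.Adj v' l := fun h => hne (hl _ h.symm).symm
  -- `v` has a second neighbour, since otherwise `{l, v}` would be a component of `G`.
  have hv2 : 1 < (G.neighborSet v').ncard := by
    refine lt_of_lt_of_le ?_ hd
    by_contra hle
    have hsub : ∀ x, G.Adj v x → x = l := fun x hx =>
      Set.ncard_le_one_iff (Set.toFinite _) |>.mp (not_lt.mp hle) hx hlv.symm
    have : ∀ x y, G.Reachable x y → (x = l ∨ x = v) → (y = l ∨ y = v) := by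
      rintro x y ⟨p⟩
      induction p with
      | nil => exact id
      | @cons a b c h q ih =>
        rintro (rfl | rfl)
        · exact ih (Or.inr (hl _ h))
        · exact ih (Or.inl (hsub _ h))
    rcases this l v' (hG.1.preconnected l v') (Or.inl rfl) with h | h
    exacts [hlv' h.symm, hne h.symm]
  -- `v'` has a neighbour besides any given one, and, when `v` has two neighbours besides `l`,
  -- a neighbour besides any given two.
  have second : ∀ u, ∃ w, G.Adj v' w ∧ w ≠ u := fun u => by
    obtain ⟨w, hw, hwu⟩ := Set.exists_mem_notMem_of_ncard_lt_ncard
      (s := {u}) (t := G.neighborSet v') (by simpa using hv2)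
    exact ⟨w, hw, hwu⟩
  have third : ∀ a b, G.Adj v a → G.Adj v b → a ≠ b → a ≠ l → b ≠ l →
      ∀ x y, ∃ w, G.Adj v' w ∧ w ≠ x ∧ w ≠ y := by
    intro a b ha hb hab hal hbl x y
    have h3 : 3 ≤ (G.neighborSet v).ncard := by
      have hc : ({a, b, l} : Set V).ncard = 3 :=
        Set.ncard_eq_three.mpr ⟨a, b, l, hab, hal, hbl, rfl⟩
      rw [← hc]
      refine Set.ncard_le_ncard ?_ (Set.toFinite _)
      rintro z (rfl | rfl | rfl)
      exacts [ha, hb, hlv.symm]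
    obtain ⟨w, hw, hwu⟩ := Set.exists_mem_notMem_of_ncard_lt_ncard
      (s := {x, y}) (t := G.neighborSet v') (by
        have := Set.ncard_insert_le x {y}
        rw [Set.ncard_singleton] at this
        omega)
    simp only [Set.mem_insert_iff, Set.mem_singleton_iff, not_or] at hwu
    exact ⟨w, hw, hwu⟩
  by_cases hadj : G.Adj v' v
  · have hr : ∀ w, w ≠ v → (G.deleteEdges {s(v', w)}).Reachable v' v := fun w hw =>
      Adj.reachable (by
        rw [deleteEdges_adj, Set.mem_singleton_iff, Sym2.eq_iff]
        exact ⟨hadj, by grind⟩)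
    obtain ⟨w, hw, hwv⟩ := second v
    by_cases hvw : G.Adj v w
    · obtain ⟨x, hx, hxv, hxw⟩ := third v' w hadj.symm hvw hw.ne hlv'.symm
        (by rintro rfl; exact hlN hw) v w
      refine ⟨x, hx, hxv, fun hvx => ?_, hr x hxv⟩
      exact hG.false_of_two_triangles hadj hw hx hvw hvx hxw.symm
    · exact ⟨w, hw, hwv, hvw, hr w hwv⟩
  have hnv : ∀ w, G.Adj v' w → w ≠ v := fun w hw h => hadj (h ▸ hw)
  by_cases hcom : ∃ u, G.Adj v' u ∧ G.Adj v u
  · obtain ⟨u, hu, hvu⟩ := hcom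
    have hr : ∀ w, w ≠ u → (G.deleteEdges {s(v', w)}).Reachable v' v := fun w hw =>
      (Adj.reachable (v := u) (by
        rw [deleteEdges_adj, Set.mem_singleton_iff, Sym2.eq_iff]
        exact ⟨hu, by grind⟩)).trans
      (Adj.reachable (by
        rw [deleteEdges_adj, Set.mem_singleton_iff, Sym2.eq_iff]
        exact ⟨hvu.symm, by have := hu.ne; grind⟩))
    obtain ⟨w, hw, hwu⟩ := second u
    by_cases hvw : G.Adj v w
    · obtain ⟨x, hx, hxu, hxw⟩ := third u w hvu hvw hwu.symm
        (by rintro rfl; exact hlN hu) (by rintro rfl; exact hlN hw) u w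
      refine ⟨x, hx, hnv x hx, fun hvx => ?_, hr x hxu⟩
      exact hG.false_of_three_common hne.symm hu hw hx hvu hvw hvx hwu.symm hxu.symm hxw.symm
    · exact ⟨w, hw, hnv w hw, hvw, hr w hwu⟩
  · obtain ⟨p, hp⟩ := hG.1.exists_isPath v' v
    cases p with
    | nil => exact absurd rfl hne
    | @cons _ u _ h q =>
      obtain ⟨w, hw, hwu⟩ := second u
      refine ⟨w, hw, hnv w hw, fun hvw => hcom ⟨w, hw, hvw⟩, ?_⟩
      refine ⟨(Walk.cons h q).toDeleteEdge s(v', w) ?_⟩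
      rw [Walk.cons_isPath_iff] at hp
      rw [Walk.edges_cons, List.mem_cons]
      rintro (he | he)
      · rw [Sym2.eq_iff] at he
        grind
      · exact hp.2 (q.fst_mem_support_of_mem_edges he)

/-- If the intended new neighbour `v'` of the leaf `l` has at least the degree of the
current one `v`, then some unicyclicity-preserving 2-switch attaches `l` to `v'`. -/
theorem exists_switch [Finite V] {G : SimpleGraph V} (hG : Unicyclic G) {l v v' : V}
    (hl : (G.neighborSet l).ncard = 1) (hlv : G.Adj l v) (hne : v ≠ v') (hlv' : l ≠ v')
    (hd : (G.neighborSet v).ncard ≤ (G.neighborSet v').ncard) :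
    ∃ w, IsNontrivialSwitch G l v v' w ∧ Unicyclic (twoSwitch G l v v' w) ∧
      ((twoSwitch G l v v' w).neighborSet l).ncard = 1 ∧ (twoSwitch G l v v' w).Adj l v' := by
  have hl' : ∀ x, G.Adj l x → x = v := fun x hx =>
    Set.ncard_le_one_iff (Set.toFinite _) |>.mp hl.le hx hlv
  obtain ⟨w, hw, hwv, hvw, hr⟩ := exists_edge_to_switch hG hl' hlv hne hlv' hd
  have hlw : l ≠ w := by
    rintro rfl
    exact hne (hl' _ hw.symm).symm
  have hs : IsNontrivialSwitch G l v v' w := by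
    refine ⟨?_, hlv, hw, fun h => hne (hl' _ h).symm, hvw⟩
    simp [hlv.ne, hlv', hlw, hne, hwv.symm, hw.ne]
  refine ⟨w, hs, unicyclic_iff.mpr ⟨connected_twoSwitch_leaf hG.1 hs hl' hr, ?_⟩, ?_, ?_⟩
  · rw [hs.ncard_edgeSet, (unicyclic_iff.mp hG).2]
  · rw [Set.ncard_eq_one]
    refine ⟨v', ?_⟩
    ext x
    rw [mem_neighborSet, twoSwitch_adj, Set.mem_singleton_iff]
    simp only [ne_eq, Sym2.eq_iff]
    have := hlv.ne
    grind
  · exact twoSwitch_adj.mpr (Or.inr ⟨Or.inl rfl, hlv'⟩)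

/-- The average degree of a unicyclic graph is two, so unless all degrees are two, some vertex
has degree one. -/
theorem Unicyclic.exists_leaf [Fintype V] {G : SimpleGraph V} (hG : Unicyclic G)
    (hnc : ¬ IsCycleGraph G) : ∃ l, (G.neighborSet l).ncard = 1 := by
  classical
  obtain ⟨hc, hcard⟩ := unicyclic_iff.mp hG
  have hcard' : G.edgeFinset.card = Fintype.card V := by
    rw [← Nat.card_eq_fintype_card, ← hcard, Set.ncard_eq_toFinset_card']
    rfl
  have hsum := G.sum_degrees_eq_twice_card_edges
  have hnt : Nontrivial V := by
    have := hc.nonempty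
    obtain ⟨e, he⟩ : G.edgeFinset.Nonempty := by
      rw [← Finset.card_pos, hcard']; exact Fintype.card_pos
    induction e with
    | h x y => exact ⟨x, y, by simp at he; exact he.ne⟩
  by_contra! hno
  have h2 : ∀ x ∈ Finset.univ, 2 ≤ G.degree x := fun x _ => by
    have h0 := hc.preconnected.degree_pos_of_nontrivial x
    have h1 := hno x
    rw [ncard_neighborSet_eq_degree] at h1
    omega
  refine hnc ⟨hc, fun x => ?_⟩
  rw [ncard_neighborSet_eq_degree]
  refine ((Finset.sum_eq_sum_iff_of_le h2).mp ?_ x (Finset.mem_univ x)).symm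
  rw [hsum, hcard', Finset.sum_const, Finset.card_univ, smul_eq_mul, mul_comm]

/-- if U and U' are unicyclic graphs with the same degree sequence, neither is a
cycle graph, and they do not share a leaf, then one of them admits a nontrivial 2-switch,
with unicyclic image, after which the two graphs share a leaf. -/
theorem stmt9 {V : Type*} [Fintype V] (U U' : SimpleGraph V)
    (hU : Unicyclic U) (hU' : Unicyclic U')
    (hdeg : ∀ x : V, (U.neighborSet x).ncard = (U'.neighborSet x).ncard)
    (hnc : ¬ IsCycleGraph U) (hnc' : ¬ IsCycleGraph U')
    (hnoshared : ¬ SharedLeaf U U') :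
    (∃ a b c d : V, IsNontrivialSwitch U a b c d ∧ Unicyclic (twoSwitch U a b c d) ∧
        SharedLeaf (twoSwitch U a b c d) U') ∨
    (∃ a b c d : V, IsNontrivialSwitch U' a b c d ∧ Unicyclic (twoSwitch U' a b c d) ∧
        SharedLeaf U (twoSwitch U' a b c d)) := by
  obtain ⟨l, hl⟩ := hU.exists_leaf hnc
  have hl' : (U'.neighborSet l).ncard = 1 := hdeg l ▸ hl
  obtain ⟨v, hv⟩ : ∃ v, U.Adj l v := by
    obtain ⟨v, hv⟩ := Set.ncard_eq_one.mp hl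
    exact ⟨v, by rw [← mem_neighborSet, hv]; rfl⟩
  obtain ⟨v', hv'⟩ : ∃ v, U'.Adj l v := by
    obtain ⟨v, hv⟩ := Set.ncard_eq_one.mp hl'
    exact ⟨v, by rw [← mem_neighborSet, hv]; rfl⟩
  have hne : v ≠ v' := by
    rintro rfl
    exact hnoshared ⟨l, v, hl, hl', hv, hv'⟩
  rcases le_total (U.neighborSet v).ncard (U.neighborSet v').ncard with hd | hd
  · obtain ⟨w, hs, hT, h1, hadj⟩ := exists_switch hU hl hv hne hv'.ne hd
    exact Or.inl ⟨l, v, v', w, hs, hT, l, v', h1, hl', hadj, hv'⟩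
  · rw [hdeg, hdeg] at hd
    obtain ⟨w, hs, hT, h1, hadj⟩ := exists_switch hU' hl' hv' hne.symm hv.ne hd
    exact Or.inr ⟨l, v', v, w, hs, hT, l, v, hl, h1, hv, hadj⟩
end
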